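/- arXiv:2605.09221 — 7 statements merged into one kernel-verified Lean document; each statement's English description precedes it below -/
import Mathlib

section
/- Suppose additionally that: (i) E[S | {G = g}] = p_g for both g (group-conditional unbiasedness); (ii) E[S | {Y = 1} ∩ {G = a}] = E[S | {Y = 1} ∩ {G = b}] (positive-class balance), where both conditioning events have positive measure; and (iii) E[S | {Y = 0} ∩ {G = a}] = E[S | {Y = 0} ∩ {G = b}] (negative-class balance), where both conditioning events have positive measure. Then either p_a = p_b, or S = Y μ-almost everywhere. -/
open MeasureTheory

/-- Conditional expectation of `f` given the event `A`: `E[f | A] = (μ A)⁻¹ ∫_A f dμ`. -/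
noncomputable def condExpEvent {Ω : Type*} [MeasurableSpace Ω] (μ : Measure Ω)
    (A : Set Ω) (f : Ω → ℝ) : ℝ :=
  (μ A).toReal⁻¹ * ∫ ω in A, f ω ∂μ

/-- If `f ≥ 0` a.e. has zero integral over `A`, then it vanishes a.e. on `A`. -/
lemma kmr_zero {Ω : Type*} [MeasurableSpace Ω] (μ : Measure Ω) (A : Set Ω)
    (hA : MeasurableSet A) (f : Ω → ℝ) (hf : Integrable f μ) (h0 : ∀ᵐ ω ∂μ, 0 ≤ f ω)
    (h : ∫ ω in A, f ω ∂μ = 0) : ∀ᵐ ω ∂μ, ω ∈ A → f ω = 0 := by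
  have h1 := (integral_eq_zero_iff_of_nonneg_ae (ae_restrict_of_ae h0) hf.integrableOn).1 h
  exact (ae_restrict_iff' hA).1 h1

/-- Splitting the integral over a group into the two classes. -/
lemma kmr_split {Ω : Type*} [MeasurableSpace Ω] (μ : Measure Ω)
    (Y : Ω → ℝ) (hYmeas : Measurable Y) (hY01 : ∀ ω, Y ω = 0 ∨ Y ω = 1)
    (B : Set Ω) (hB : MeasurableSet B) (f : Ω → ℝ) (hf : Integrable f μ) :
    ∫ ω in B, f ω ∂μ = ∫ ω in {ω | Y ω = 1} ∩ B, f ω ∂μ + ∫ ω in {ω | Y ω = 0} ∩ B, f ω ∂μ := by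
  have h1 : MeasurableSet {ω | Y ω = 1} := hYmeas (measurableSet_singleton 1)
  have h0 : MeasurableSet {ω | Y ω = 0} := hYmeas (measurableSet_singleton 0)
  rw [← setIntegral_union _ (h0.inter hB) hf.integrableOn hf.integrableOn]
  · congr 2
    ext ω
    have := hY01 ω
    simp only [Set.mem_union, Set.mem_inter_iff, Set.mem_ofPred_eq]
    tauto
  · rw [Set.disjoint_left]
    rintro ω ⟨ha, _⟩ ⟨hb, _⟩
    simp only [Set.mem_ofPred_eq] at ha hb
    linarith

/-- **Stronger KMR.** If `S ∈ [0,1]` is group-conditionally unbiased and satisfies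
positive- and negative-class balance, then either the base rates coincide or `S = Y`
almost everywhere. -/
theorem stronger_kmr {Ω : Type*} [MeasurableSpace Ω] (μ : Measure Ω)
    [IsProbabilityMeasure μ]
    (Y : Ω → ℝ) (hYmeas : Measurable Y) (hY01 : ∀ ω, Y ω = 0 ∨ Y ω = 1)
    (G : Ω → Bool) (hGmeas : Measurable G)
    (hGa : 0 < μ {ω | G ω = true}) (hGb : 0 < μ {ω | G ω = false})
    (S : Ω → ℝ) (hSmeas : Measurable S)
    (hS01 : ∀ᵐ ω ∂μ, 0 ≤ S ω ∧ S ω ≤ 1)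
    (p : Bool → ℝ) (hp : ∀ g, p g = condExpEvent μ {ω | G ω = g} Y)
    (hp01 : ∀ g, 0 < p g ∧ p g < 1)
    -- (i) group-conditional unbiasedness
    (hunbiased : ∀ g, condExpEvent μ {ω | G ω = g} S = p g)
    -- (ii) positive-class balance, conditioning events have positive measure
    (hpos_a : 0 < μ ({ω | Y ω = 1} ∩ {ω | G ω = true}))
    (hpos_b : 0 < μ ({ω | Y ω = 1} ∩ {ω | G ω = false}))
    (hbal_pos : condExpEvent μ ({ω | Y ω = 1} ∩ {ω | G ω = true}) S
      = condExpEvent μ ({ω | Y ω = 1} ∩ {ω | G ω = false}) S)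
    -- (iii) negative-class balance, conditioning events have positive measure
    (hneg_a : 0 < μ ({ω | Y ω = 0} ∩ {ω | G ω = true}))
    (hneg_b : 0 < μ ({ω | Y ω = 0} ∩ {ω | G ω = false}))
    (hbal_neg : condExpEvent μ ({ω | Y ω = 0} ∩ {ω | G ω = true}) S
      = condExpEvent μ ({ω | Y ω = 0} ∩ {ω | G ω = false}) S) :
    p true = p false ∨ S =ᵐ[μ] Y := by
  have hY1 : MeasurableSet {ω | Y ω = 1} := hYmeas (measurableSet_singleton 1)
  have hY0 : MeasurableSet {ω | Y ω = 0} := hYmeas (measurableSet_singleton 0)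
  have hG : ∀ g, MeasurableSet {ω | G ω = g} := fun g => hGmeas (measurableSet_singleton g)
  have hSint : Integrable S μ := by
    refine Integrable.of_bound hSmeas.aestronglyMeasurable 1 ?_
    filter_upwards [hS01] with ω h
    rw [Real.norm_eq_abs, abs_of_nonneg h.1]
    exact h.2
  have hYint : Integrable Y μ := by
    refine Integrable.of_bound hYmeas.aestronglyMeasurable 1 (Filter.Eventually.of_forall ?_)
    intro ω
    rcases hY01 ω with h | h <;> simp [h]
  have hone : Integrable (fun _ : Ω => (1 : ℝ)) μ := integrable_const 1
  have key : ∀ g x y, 0 < μ {ω | G ω = g} → 0 < μ ({ω | Y ω = 1} ∩ {ω | G ω = g}) →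
      0 < μ ({ω | Y ω = 0} ∩ {ω | G ω = g}) →
      condExpEvent μ ({ω | Y ω = 1} ∩ {ω | G ω = g}) S = x →
      condExpEvent μ ({ω | Y ω = 0} ∩ {ω | G ω = g}) S = y →
      p g * x + (1 - p g) * y = p g ∧
      (x = 1 → y = 0 → ∀ᵐ ω ∂μ, G ω = g → S ω = Y ω) := by
    intro g x y hM hP hN hx hy
    have sS := kmr_split μ Y hYmeas hY01 _ (hG g) S hSint
    have sY := kmr_split μ Y hYmeas hY01 _ (hG g) Y hYint
    have s1 := kmr_split μ Y hYmeas hY01 _ (hG g) _ hone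
    have e1 : ∫ ω in {ω | Y ω = 1} ∩ {ω | G ω = g}, Y ω ∂μ
        = ∫ ω in {ω | Y ω = 1} ∩ {ω | G ω = g}, (1 : ℝ) ∂μ :=
      setIntegral_congr_fun (hY1.inter (hG g)) (fun ω h => h.1)
    have e0 : ∫ ω in {ω | Y ω = 0} ∩ {ω | G ω = g}, Y ω ∂μ
        = ∫ ω in {ω | Y ω = 0} ∩ {ω | G ω = g}, (0 : ℝ) ∂μ :=
      setIntegral_congr_fun (hY0.inter (hG g)) (fun ω h => h.1)
    have hu := hunbiased g
    have hpg := hp g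
    have hsub : ∫ ω in {ω | Y ω = 1} ∩ {ω | G ω = g}, (1 - S ω) ∂μ
        = ∫ ω in {ω | Y ω = 1} ∩ {ω | G ω = g}, (1 : ℝ) ∂μ
          - ∫ ω in {ω | Y ω = 1} ∩ {ω | G ω = g}, S ω ∂μ :=
      integral_sub hone.integrableOn hSint.integrableOn
    have hM' := ENNReal.toReal_pos hM.ne' (measure_ne_top _ _)
    have hP' := ENNReal.toReal_pos hP.ne' (measure_ne_top _ _)
    have hN' := ENNReal.toReal_pos hN.ne' (measure_ne_top _ _)
    simp only [integral_const, Measure.restrict_apply_univ,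
      smul_eq_mul, mul_one, mul_zero, Measure.real] at s1 e1 e0 hsub
    unfold condExpEvent at hu hpg hx hy
    rw [e1, e0] at sY
    rw [sY] at hpg
    rw [sS] at hu
    generalize hIP : ∫ ω in {ω | Y ω = 1} ∩ {ω | G ω = g}, S ω ∂μ = IP at *
    generalize hIN : ∫ ω in {ω | Y ω = 0} ∩ {ω | G ω = g}, S ω ∂μ = IN at *
    generalize (μ {ω | G ω = g}).toReal = M at *
    generalize (μ ({ω | Y ω = 1} ∩ {ω | G ω = g})).toReal = P at *
    generalize (μ ({ω | Y ω = 0} ∩ {ω | G ω = g})).toReal = N at *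
    have hxP : IP = P * x := by rw [← hx]; field_simp
    have hyN : IN = N * y := by rw [← hy]; field_simp
    have h1 : p g * M = P := by rw [hpg]; field_simp; ring
    have h2 : IP + IN = p g * M := by rw [← hu]; field_simp
    constructor
    · have : M * (p g * x + (1 - p g) * y) = M * p g := by
        have h3 : (1 - p g) * M = N := by linarith
        calc M * (p g * x + (1 - p g) * y) = (p g * M) * x + ((1 - p g) * M) * y := by ring
          _ = M * p g := by rw [h1, h3, ← hxP, ← hyN, h2]; ring
      exact mul_left_cancel₀ hM'.ne' this
    · intro hx1 hy0
      have z1 := kmr_zero μ _ (hY1.inter (hG g)) (fun ω => 1 - S ω) (hone.sub hSint)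
        (by filter_upwards [hS01] with ω h; linarith [h.2])
        (by rw [hsub, hxP, hx1]; ring)
      have z0 := kmr_zero μ _ (hY0.inter (hG g)) S hSint
        (by filter_upwards [hS01] with ω h; exact h.1)
        (by rw [hIN, hyN, hy0]; ring)
      filter_upwards [z1, z0] with ω a b hg
      rcases hY01 ω with h | h
      · rw [h, b ⟨h, hg⟩]
      · have := a ⟨h, hg⟩
        rw [h]; linarith
  obtain ⟨ka, ka'⟩ := key true _ _ hGa hpos_a hneg_a hbal_pos hbal_neg
  obtain ⟨kb, kb'⟩ := key false _ _ hGb hpos_b hneg_b rfl rfl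
  generalize condExpEvent μ ({ω | Y ω = 1} ∩ {ω | G ω = false}) S = x at *
  generalize condExpEvent μ ({ω | Y ω = 0} ∩ {ω | G ω = false}) S = y at *
  by_cases hpp : p true = p false
  · exact Or.inl hpp
  · right
    have h1 : (p true - p false) * (1 - x + y) = 0 := by linarith
    have h2 : 1 - x + y = 0 := (mul_eq_zero.1 h1).resolve_left (sub_ne_zero.2 hpp)
    have h3 : y = 0 := by
      have : x = 1 + y := by linarith
      rw [this] at ka; linarith
    have h4 : x = 1 := by linarith
    filter_upwards [ka' h4 h3, kb' h4 h3] with ω a b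
    cases hg : G ω
    · exact b hg
    · exact a hg
end

section
/- Suppose additionally that: (i) S is a version of the conditional expectation of Y given the σ-algebra generated by the pair (S, G), i.e. μ[Y | σ(S, G)] = S almost everywhere (within-group calibration); (ii) E[S | {Y = 1} ∩ {G = a}] = E[S | {Y = 1} ∩ {G = b}], where both conditioning events have positive measure; and (iii) E[S | {Y = 0} ∩ {G = a}] = E[S | {Y = 0} ∩ {G = b}], where both conditioning events have positive measure. Then either p_a = p_b, or S = Y μ-almost everywhere. -/
open MeasureTheory

/-- The σ-algebra generated by the pair `(S, G)`. -/
def sigmaSG {Ω : Type*} (S : Ω → ℝ) (G : Ω → Bool) : MeasurableSpace Ω :=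
  MeasurableSpace.comap (fun ω => (S ω, G ω)) inferInstance

/-- **Classical KMR.** If `S ∈ [0,1]` is calibrated (a version of `E[Y | σ(S,G)]`) and
satisfies positive- and negative-class balance, then either the base rates coincide
or `S = Y` almost everywhere. -/
theorem classical_kmr {Ω : Type*} [𝓕 : MeasurableSpace Ω] (μ : Measure Ω)
    [IsProbabilityMeasure μ]
    (Y : Ω → ℝ) (hYmeas : Measurable Y) (hY01 : ∀ ω, Y ω = 0 ∨ Y ω = 1)
    (G : Ω → Bool) (hGmeas : Measurable G)
    (hGa : 0 < μ {ω | G ω = true}) (hGb : 0 < μ {ω | G ω = false})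
    (S : Ω → ℝ) (hSmeas : Measurable S)
    (hS01 : ∀ᵐ ω ∂μ, 0 ≤ S ω ∧ S ω ≤ 1)
    (p : Bool → ℝ) (hp : ∀ g, p g = condExpEvent μ {ω | G ω = g} Y)
    (hp01 : ∀ g, 0 < p g ∧ p g < 1)
    -- (i) within-group calibration: S is a version of E[Y | σ(S,G)]
    (hcalib : μ[Y | sigmaSG S G] =ᵐ[μ] S)
    -- (ii) positive-class balance, conditioning events have positive measure
    (hpos_a : 0 < μ ({ω | Y ω = 1} ∩ {ω | G ω = true}))
    (hpos_b : 0 < μ ({ω | Y ω = 1} ∩ {ω | G ω = false}))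
    (hbal_pos : condExpEvent μ ({ω | Y ω = 1} ∩ {ω | G ω = true}) S
      = condExpEvent μ ({ω | Y ω = 1} ∩ {ω | G ω = false}) S)
    -- (iii) negative-class balance, conditioning events have positive measure
    (hneg_a : 0 < μ ({ω | Y ω = 0} ∩ {ω | G ω = true}))
    (hneg_b : 0 < μ ({ω | Y ω = 0} ∩ {ω | G ω = false}))
    (hbal_neg : condExpEvent μ ({ω | Y ω = 0} ∩ {ω | G ω = true}) S
      = condExpEvent μ ({ω | Y ω = 0} ∩ {ω | G ω = false}) S) :
    p true = p false ∨ S =ᵐ[μ] Y := by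
  have hYi : Integrable Y μ := by
    refine Integrable.of_bound hYmeas.aestronglyMeasurable 1 (Filter.Eventually.of_forall fun ω => ?_)
    rcases hY01 ω with h | h <;> simp [h]
  have hSi : Integrable S μ := by
    refine Integrable.of_bound hSmeas.aestronglyMeasurable 1 ?_
    filter_upwards [hS01] with ω h
    rw [Real.norm_eq_abs, abs_le]
    constructor <;> linarith [h.1, h.2]
  have hSYi : Integrable (fun ω => S ω * Y ω) μ := by
    refine Integrable.of_bound (hSmeas.mul hYmeas).aestronglyMeasurable 1 ?_
    filter_upwards [hS01] with ω h
    rw [Real.norm_eq_abs, abs_le]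
    rcases hY01 ω with hy | hy <;> rw [hy] <;> constructor <;> linarith [h.1, h.2]
  have hm : sigmaSG S G ≤ 𝓕 := (hSmeas.prodMk hGmeas).comap_le
  have hGm : ∀ g, MeasurableSet {ω | G ω = g} := fun g => hGmeas (measurableSet_singleton g)
  have hYm : ∀ y, MeasurableSet {ω | Y ω = y} := fun y => hYmeas (measurableSet_singleton y)
  -- calibration integrated over each group
  have hcal : ∀ g, ∫ ω in {ω | G ω = g}, S ω ∂μ = ∫ ω in {ω | G ω = g}, Y ω ∂μ := by
    intro g
    have hs : MeasurableSet[sigmaSG S G] {ω | G ω = g} :=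
      ⟨Prod.snd ⁻¹' {g}, measurable_snd (measurableSet_singleton g), rfl⟩
    rw [← setIntegral_condExp hm hYi hs]
    exact (setIntegral_congr_ae (hGm g) (hcalib.mono fun ω h _ => h)).symm
  have hpn : ∀ g, 0 < μ ({ω | Y ω = 1} ∩ {ω | G ω = g}) ∧
      0 < μ ({ω | Y ω = 0} ∩ {ω | G ω = g}) := by
    intro g; cases g
    · exact ⟨hpos_b, hneg_b⟩
    · exact ⟨hpos_a, hneg_a⟩
  have hunion : ∀ g, {ω | G ω = g} =
      ({ω | Y ω = 1} ∩ {ω | G ω = g}) ∪ ({ω | Y ω = 0} ∩ {ω | G ω = g}) := by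
    intro g; ext ω
    rcases hY01 ω with h | h <;> simp [h]
  have hdisj : ∀ g, Disjoint ({ω | Y ω = 1} ∩ {ω | G ω = g})
      ({ω | Y ω = 0} ∩ {ω | G ω = g}) := by
    intro g
    rw [Set.disjoint_left]
    rintro ω ⟨h1, _⟩ ⟨h0, _⟩
    simp only [Set.mem_ofPred_eq] at h1 h0
    linarith
  have hsplit : ∀ g (f : Ω → ℝ), Integrable f μ → ∫ ω in {ω | G ω = g}, f ω ∂μ =
      ∫ ω in {ω | Y ω = 1} ∩ {ω | G ω = g}, f ω ∂μ +
      ∫ ω in {ω | Y ω = 0} ∩ {ω | G ω = g}, f ω ∂μ := by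
    intro g f hf
    conv_lhs => rw [hunion g]
    exact setIntegral_union (hdisj g) ((hYm 0).inter (hGm g)) hf.integrableOn hf.integrableOn
  have hY1 : ∀ g (f : Ω → ℝ), ∫ ω in {ω | Y ω = 1} ∩ {ω | G ω = g}, f ω * Y ω ∂μ =
      ∫ ω in {ω | Y ω = 1} ∩ {ω | G ω = g}, f ω ∂μ := fun g f =>
    setIntegral_congr_fun ((hYm 1).inter (hGm g)) fun ω h => by
      have : Y ω = 1 := h.1
      simp [this]
  have hY0 : ∀ g (f : Ω → ℝ), ∫ ω in {ω | Y ω = 0} ∩ {ω | G ω = g}, f ω * Y ω ∂μ = 0 := by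
    intro g f
    rw [setIntegral_congr_fun (g := fun _ => (0:ℝ)) ((hYm 0).inter (hGm g)) fun ω h => by
      have : Y ω = 0 := h.1
      simp [this]]
    simp
  set P : Bool → ℝ := fun g => (μ ({ω | Y ω = 1} ∩ {ω | G ω = g})).toReal with hP
  set N : Bool → ℝ := fun g => (μ ({ω | Y ω = 0} ∩ {ω | G ω = g})).toReal with hN
  have hPpos : ∀ g, 0 < P g := fun g => ENNReal.toReal_pos (hpn g).1.ne' (measure_ne_top _ _)
  have hNpos : ∀ g, 0 < N g := fun g => ENNReal.toReal_pos (hpn g).2.ne' (measure_ne_top _ _)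
  have hn : ∀ g, (μ {ω | G ω = g}).toReal = P g + N g := by
    intro g
    conv_lhs => rw [hunion g]
    rw [measure_union (hdisj g) ((hYm 0).inter (hGm g)),
      ENNReal.toReal_add (measure_ne_top _ _) (measure_ne_top _ _)]
  have hYint : ∀ g, ∫ ω in {ω | G ω = g}, Y ω ∂μ = P g := by
    intro g
    rw [hsplit g Y hYi]
    have h1 := hY1 g (fun _ => 1)
    have h0 := hY0 g (fun _ => 1)
    simp only [one_mul] at h1 h0
    rw [h1, h0]
    simp [hP, Measure.real]
  have hpg : ∀ g, p g * (P g + N g) = P g := by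
    intro g
    have := hPpos g
    have := hNpos g
    rw [hp g, condExpEvent, hn, hYint]
    field_simp
  obtain ⟨c, hc⟩ : ∃ c, ∀ g, condExpEvent μ ({ω | Y ω = 1} ∩ {ω | G ω = g}) S = c :=
    ⟨_, fun g => by cases g; exacts [hbal_pos.symm, rfl]⟩
  obtain ⟨d, hd⟩ : ∃ d, ∀ g, condExpEvent μ ({ω | Y ω = 0} ∩ {ω | G ω = g}) S = d :=
    ⟨_, fun g => by cases g; exacts [hbal_neg.symm, rfl]⟩
  have hA : ∀ g, ∫ ω in {ω | Y ω = 1} ∩ {ω | G ω = g}, S ω ∂μ = c * P g := by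
    intro g
    have h := hPpos g
    rw [← hc g, condExpEvent]
    change _ = (P g)⁻¹ * _ * P g
    field_simp
  have hB : ∀ g, ∫ ω in {ω | Y ω = 0} ∩ {ω | G ω = g}, S ω ∂μ = d * N g := by
    intro g
    have h := hNpos g
    rw [← hd g, condExpEvent]
    change _ = (N g)⁻¹ * _ * N g
    field_simp
  have hsum : ∀ g, c * P g + d * N g = P g := by
    intro g
    rw [← hA, ← hB, ← hsplit g S hSi, hcal, hYint]
  have hlin : ∀ g, p g * (1 - c + d) = d := by
    intro g
    have h1 := hPpos g
    have h2 := hNpos g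
    have h3 : (P g + N g) ≠ 0 := by positivity
    apply mul_right_cancel₀ h3
    linear_combination (1 - c + d) * hpg g - hsum g
  by_cases hpe : p true = p false
  · exact Or.inl hpe
  right
  have hcd : 1 - c + d = 0 := by
    have : (p true - p false) * (1 - c + d) = 0 := by
      linear_combination hlin true - hlin false
    exact (mul_eq_zero.mp this).resolve_left (sub_ne_zero.mpr hpe)
  have hd0 : d = 0 := by rw [← hlin true, hcd, mul_zero]
  have hc1 : c = 1 := by linarith
  have hFi : Integrable (fun ω => S ω + Y ω - 2 * (S ω * Y ω)) μ :=
    (hSi.add hYi).sub (hSYi.const_mul 2)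
  have hFg : ∀ g, ∫ ω in {ω | G ω = g}, (S ω + Y ω - 2 * (S ω * Y ω)) ∂μ = 0 := by
    intro g
    have hadd : Integrable (fun ω => S ω + Y ω) μ := hSi.add hYi
    rw [integral_sub hadd.integrableOn (hSYi.const_mul 2).integrableOn,
      integral_add hSi.integrableOn hYi.integrableOn, integral_const_mul, hcal, hYint,
      hsplit g _ hSYi, hY1, hY0, hA, hc1]
    ring
  have hF : ∫ ω, (S ω + Y ω - 2 * (S ω * Y ω)) ∂μ = 0 := by
    rw [← integral_add_compl (hGm true) hFi, hFg true]
    have : {ω | G ω = true}ᶜ = {ω | G ω = false} := by ext ω; simp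
    rw [this, hFg false, add_zero]
  have hF0 : 0 ≤ᵐ[μ] fun ω => S ω + Y ω - 2 * (S ω * Y ω) := by
    filter_upwards [hS01] with ω h
    rcases hY01 ω with hy | hy <;> simp only [hy, Pi.zero_apply] <;> linarith [h.1, h.2]
  filter_upwards [(integral_eq_zero_iff_of_nonneg_ae hF0 hFi).mp hF] with ω h
  simp only [Pi.zero_apply] at h
  rcases hY01 ω with hy | hy <;> rw [hy] at h ⊢ <;> linarith
end

section
/- If S is a version of the conditional expectation of Y given the σ-algebra generated by the pair (S, G), i.e. μ[Y | σ(S, G)] = S almost everywhere, then S is group-conditionally unbiased: E[S | {G = g}] = p_g for both g ∈ {a, b}. -/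
open MeasureTheory

/-- **Calibration implies group-conditional unbiasedness.** If `S` is a version of
`E[Y | σ(S,G)]`, then `E[S | {G = g}] = p_g` for both groups. -/
theorem calibration_implies_unbiasedness {Ω : Type*} [𝓕 : MeasurableSpace Ω]
    (μ : Measure Ω) [IsProbabilityMeasure μ]
    (Y : Ω → ℝ) (hYmeas : Measurable Y) (hY01 : ∀ ω, Y ω = 0 ∨ Y ω = 1)
    (G : Ω → Bool) (hGmeas : Measurable G)
    (hGa : 0 < μ {ω | G ω = true}) (hGb : 0 < μ {ω | G ω = false})
    (S : Ω → ℝ) (hSmeas : Measurable S)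
    (hS01 : ∀ᵐ ω ∂μ, 0 ≤ S ω ∧ S ω ≤ 1)
    (p : Bool → ℝ) (hp : ∀ g, p g = condExpEvent μ {ω | G ω = g} Y)
    -- calibration: S is a version of E[Y | σ(S,G)]
    (hcalib : μ[Y | sigmaSG S G] =ᵐ[μ] S) :
    ∀ g, condExpEvent μ {ω | G ω = g} S = p g := by
  intro g
  have hm : sigmaSG S G ≤ 𝓕 := (hSmeas.prodMk hGmeas).comap_le
  have hYint : Integrable Y μ := by
    refine Integrable.of_bound hYmeas.aestronglyMeasurable 1 (Filter.Eventually.of_forall ?_)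
    intro ω
    rcases hY01 ω with h | h <;> simp [h]
  have hA : MeasurableSet[sigmaSG S G] {ω | G ω = g} :=
    ⟨{q : ℝ × Bool | q.2 = g}, measurable_snd (measurableSet_singleton g), rfl⟩
  rw [hp g]
  unfold condExpEvent
  rw [← setIntegral_condExp hm hYint hA]
  congr 1
  exact integral_congr_ae (ae_restrict_of_ae (hcalib.mono fun _ h => h.symm))
end

section
/- (Mean-embedding collapse.) If μ_a = μ_b (distributional parity), δ_0 = 0 and δ_1 = 0 (class-conditional separation), and p_a ≠ p_b, then μ_{1,a} = μ_{0,a} and μ_{1,b} = μ_{0,b}; that is, the class-conditional embeddings coincide. -/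
/-- **Mean-embedding collapse.** With group embeddings
`μ_g = p_g • μ_{1,g} + (1 - p_g) • μ_{0,g}` and class-conditional group differences
`δ_y = μ_{y,a} - μ_{y,b}`, if distributional parity `μ_a = μ_b` and class-conditional
separation `δ_0 = 0`, `δ_1 = 0` hold with `p_a ≠ p_b`, then the class-conditional
embeddings coincide in each group. -/
theorem mean_embedding_collapse {M : Type*} [AddCommGroup M] [Module ℝ M]
    (μ1a μ0a μ1b μ0b : M) (pa pb : ℝ)
    (hparity : pa • μ1a + (1 - pa) • μ0a = pb • μ1b + (1 - pb) • μ0b)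
    (hsep1 : μ1a - μ1b = 0) (hsep0 : μ0a - μ0b = 0)
    (hbase : pa ≠ pb) :
    μ1a = μ0a ∧ μ1b = μ0b := by
  obtain rfl := sub_eq_zero.mp hsep1
  obtain rfl := sub_eq_zero.mp hsep0
  have h : (pa - pb) • (μ1a - μ0a) = 0 := by
    have h2 := sub_eq_zero.mpr hparity
    rw [← h2]
    module
  have h3 : μ1a = μ0a :=
    sub_eq_zero.mp ((smul_eq_zero.mp h).resolve_left (sub_ne_zero.mpr hbase))
  exact ⟨h3, h3⟩
end

section
/- (Impossibility of fair feature learning, distributional form.) Suppose: (a) the conditional law of Z given {G = a} equals the conditional law of Z given {G = b} (distributional parity); and (b) for each y ∈ {0,1}, the conditional law of Z given {Y = y} ∩ {G = a} equals the conditional law of Z given {Y = y} ∩ {G = b} (class-conditional separation), all conditioning events having positive measure. If p_a ≠ p_b, then the conditional law of Z given {Y = 1} equals the conditional law of Z given {Y = 0}; consequently, for every bounded measurable f : 𝒵 → ℝ, E[f ∘ Z | {Y = 1}] = E[f ∘ Z | {Y = 0}]. -/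
open MeasureTheory

/-- The conditional law of `Z` given the event `A`: the pushforward under `Z` of the
normalized restriction of `μ` to `A`. -/
noncomputable def condLaw {Ω 𝒵 : Type*} [MeasurableSpace Ω] [MeasurableSpace 𝒵]
    (μ : Measure Ω) (Z : Ω → 𝒵) (A : Set Ω) : Measure 𝒵 :=
  Measure.map Z ((μ A)⁻¹ • μ.restrict A)

lemma condLaw_real_apply {Ω 𝒵 : Type*} [MeasurableSpace Ω] [MeasurableSpace 𝒵]
    (μ : Measure Ω) [IsProbabilityMeasure μ] (Z : Ω → 𝒵) (hZ : Measurable Z) (A : Set Ω)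
    {S : Set 𝒵} (hS : MeasurableSet S) :
    (condLaw μ Z A S).toReal = (μ.real A)⁻¹ * μ.real (Z ⁻¹' S ∩ A) := by
  unfold condLaw
  rw [Measure.map_apply hZ hS, Measure.smul_apply, Measure.restrict_apply (hZ hS), smul_eq_mul,
    ENNReal.toReal_mul, ENNReal.toReal_inv]
  rfl

lemma condExpEvent_eq_integral {Ω 𝒵 : Type*} [MeasurableSpace Ω] [MeasurableSpace 𝒵]
    (μ : Measure Ω) (Z : Ω → 𝒵) (hZ : Measurable Z) (A : Set Ω)
    (f : 𝒵 → ℝ) (hf : Measurable f) :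
    condExpEvent μ A (fun ω => f (Z ω)) = ∫ z, f z ∂(condLaw μ Z A) := by
  unfold condLaw condExpEvent
  rw [integral_map hZ.aemeasurable hf.aestronglyMeasurable, integral_smul_measure,
    ENNReal.toReal_inv, smul_eq_mul]

lemma mixture_algebra {a b c d x y z w : ℝ} (ha : 0 < a) (hb : 0 < b) (hc : 0 < c) (hd : 0 < d)
    (hne : (a + b)⁻¹ * a ≠ (c + d)⁻¹ * c)
    (h1 : a⁻¹ * x = c⁻¹ * z) (h0 : b⁻¹ * y = d⁻¹ * w)
    (hpar : (a + b)⁻¹ * (x + y) = (c + d)⁻¹ * (z + w)) :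
    (a + c)⁻¹ * (x + z) = (b + d)⁻¹ * (y + w) := by
  obtain ⟨q, hq⟩ : ∃ q, q = a⁻¹ * x := ⟨_, rfl⟩
  obtain ⟨r, hr⟩ : ∃ r, r = b⁻¹ * y := ⟨_, rfl⟩
  have hx : x = a * q := by rw [hq]; field_simp
  have hz : z = c * q := by rw [hq, h1]; field_simp
  have hy : y = b * r := by rw [hr]; field_simp
  have hw : w = d * r := by rw [hr, h0]; field_simp
  clear hq hr h1 h0
  subst hx hy hz hw
  have hab : a + b ≠ 0 := by positivity
  have hcd : c + d ≠ 0 := by positivity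
  have hac : a + c ≠ 0 := by positivity
  have hbd : b + d ≠ 0 := by positivity
  have key : ((a + b)⁻¹ * a - (c + d)⁻¹ * c) * (q - r) = 0 := by
    have e1 : (a + b)⁻¹ * (a * q + b * r) = (a + b)⁻¹ * a * (q - r) + r := by
      field_simp; ring
    have e2 : (c + d)⁻¹ * (c * q + d * r) = (c + d)⁻¹ * c * (q - r) + r := by
      field_simp; ring
    rw [e1, e2] at hpar
    linarith
  have hqr : q = r := by
    rcases mul_eq_zero.mp key with h | h
    · exact absurd (sub_eq_zero.mp h) hne
    · exact sub_eq_zero.mp h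
  subst hqr
  field_simp

/-- **Impossibility of fair feature learning, distributional form.** If the
representation `Z` satisfies distributional parity across groups and class-conditional
separation, and the base rates differ, then `Z` carries no class signal: its
conditional laws given `Y = 1` and `Y = 0` coincide, hence every bounded measurable
downstream predictor has equal class-conditional means. -/
theorem fair_feature_impossibility {Ω 𝒵 : Type*} [MeasurableSpace Ω] [MeasurableSpace 𝒵]
    (μ : Measure Ω) [IsProbabilityMeasure μ]
    (Z : Ω → 𝒵) (hZmeas : Measurable Z)
    (Y : Ω → ℝ) (hYmeas : Measurable Y) (hY01 : ∀ ω, Y ω = 0 ∨ Y ω = 1)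
    (G : Ω → Bool) (hGmeas : Measurable G)
    (hGa : 0 < μ {ω | G ω = true}) (hGb : 0 < μ {ω | G ω = false})
    (p : Bool → ℝ) (hp : ∀ g, p g = condExpEvent μ {ω | G ω = g} Y)
    (hp01 : ∀ g, 0 < p g ∧ p g < 1)
    (hbase : p true ≠ p false)
    -- (a) distributional parity
    (hparity : condLaw μ Z {ω | G ω = true} = condLaw μ Z {ω | G ω = false})
    -- (b) class-conditional separation, conditioning events of positive measure
    (hpos : ∀ y : ℝ, y = 0 ∨ y = 1 → ∀ g : Bool, 0 < μ ({ω | Y ω = y} ∩ {ω | G ω = g}))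
    (hsep : ∀ y : ℝ, y = 0 ∨ y = 1 →
      condLaw μ Z ({ω | Y ω = y} ∩ {ω | G ω = true})
        = condLaw μ Z ({ω | Y ω = y} ∩ {ω | G ω = false})) :
    condLaw μ Z {ω | Y ω = 1} = condLaw μ Z {ω | Y ω = 0} ∧
    ∀ f : 𝒵 → ℝ, Measurable f → (∃ C : ℝ, ∀ z, |f z| ≤ C) →
      condExpEvent μ {ω | Y ω = 1} (fun ω => f (Z ω))
        = condExpEvent μ {ω | Y ω = 0} (fun ω => f (Z ω)) := by
  have hYm : ∀ y : ℝ, MeasurableSet {ω | Y ω = y} := fun y => hYmeas (measurableSet_singleton y)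
  have hGm : ∀ g : Bool, MeasurableSet {ω | G ω = g} := fun g => hGmeas (measurableSet_singleton g)
  -- splitting along the label
  have splitG : ∀ (B : Set Ω) (g : Bool), μ.real (B ∩ {ω | G ω = g}) =
      μ.real (B ∩ ({ω | Y ω = 1} ∩ {ω | G ω = g})) +
      μ.real (B ∩ ({ω | Y ω = 0} ∩ {ω | G ω = g})) := by
    intro B g
    rw [← measureReal_inter_add_diff (s := B ∩ {ω | G ω = g}) (hYm 1)]
    congr 2
    · ext ω; simp only [Set.mem_inter_iff, Set.mem_setOf_eq]; tauto
    · ext ω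
      rcases hY01 ω with h | h <;> simp [h]
  -- splitting along the group
  have splitY : ∀ (B : Set Ω) (y : ℝ), μ.real (B ∩ {ω | Y ω = y}) =
      μ.real (B ∩ ({ω | Y ω = y} ∩ {ω | G ω = true})) +
      μ.real (B ∩ ({ω | Y ω = y} ∩ {ω | G ω = false})) := by
    intro B y
    rw [← measureReal_inter_add_diff (s := B ∩ {ω | Y ω = y}) (hGm true)]
    congr 2
    · ext ω; simp only [Set.mem_inter_iff, Set.mem_setOf_eq]; tauto
    · ext ω
      cases h : G ω <;> simp [h]
  have splitG' := fun g => splitG Set.univ g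
  have splitY' := fun y => splitY Set.univ y
  simp only [Set.univ_inter] at splitG' splitY'
  have hpos' : ∀ y : ℝ, y = 0 ∨ y = 1 → ∀ g : Bool,
      0 < μ.real ({ω | Y ω = y} ∩ {ω | G ω = g}) := fun y hy g =>
    ENNReal.toReal_pos (hpos y hy g).ne' (measure_ne_top _ _)
  have hp' : ∀ g, p g = (μ.real {ω | G ω = g})⁻¹ * μ.real ({ω | Y ω = 1} ∩ {ω | G ω = g}) := by
    intro g
    rw [hp g]
    unfold condExpEvent
    have hYind : Y = Set.indicator {ω | Y ω = 1} (fun _ => (1 : ℝ)) := by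
      ext ω
      rcases hY01 ω with h | h <;> simp [Set.indicator, h]
    have hint : ∫ ω in {ω | G ω = g}, Y ω ∂μ = μ.real ({ω | Y ω = 1} ∩ {ω | G ω = g}) := by
      calc ∫ ω in {ω | G ω = g}, Y ω ∂μ
          = ∫ ω in {ω | G ω = g}, Set.indicator {ω | Y ω = 1} (fun _ => (1 : ℝ)) ω ∂μ := by
            rw [← hYind]
        _ = _ := by
            rw [integral_indicator_const _ (hYm 1), measureReal_restrict_apply (hYm 1)]
            simp
    rw [hint]
    rfl
  have hlaw : condLaw μ Z {ω | Y ω = 1} = condLaw μ Z {ω | Y ω = 0} := by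
    ext S hS
    have hfin : ∀ y : ℝ, y = 0 ∨ y = 1 → condLaw μ Z {ω | Y ω = y} S ≠ ⊤ := by
      intro y hy
      unfold condLaw
      rw [Measure.map_apply hZmeas hS, Measure.smul_apply, smul_eq_mul]
      refine ENNReal.mul_ne_top (ENNReal.inv_ne_top.mpr ?_) (measure_ne_top _ _)
      exact ((hpos y hy true).trans_le (measure_mono Set.inter_subset_left)).ne'
    rw [← ENNReal.toReal_eq_toReal_iff' (hfin 1 (Or.inr rfl)) (hfin 0 (Or.inl rfl))]
    have h1 := congrArg (fun ν => (ν S).toReal) (hsep 1 (Or.inr rfl))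
    have h0 := congrArg (fun ν => (ν S).toReal) (hsep 0 (Or.inl rfl))
    have hpar := congrArg (fun ν => (ν S).toReal) hparity
    simp only [condLaw_real_apply μ Z hZmeas _ hS] at h1 h0 hpar ⊢
    rw [splitG, splitG, splitG', splitG'] at hpar
    rw [hp', hp', splitG', splitG'] at hbase
    rw [splitY, splitY, splitY', splitY']
    exact mixture_algebra (hpos' 1 (Or.inr rfl) true) (hpos' 0 (Or.inl rfl) true)
      (hpos' 1 (Or.inr rfl) false) (hpos' 0 (Or.inl rfl) false) hbase h1 h0 hpar
  refine ⟨hlaw, fun f hf _ => ?_⟩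
  rw [condExpEvent_eq_integral μ Z hZmeas _ f hf, condExpEvent_eq_integral μ Z hZmeas _ f hf, hlaw]
end

section
/- (Approximate fair feature learning.) Assume 0 ≤ p_a ≤ 1, 0 ≤ p_b ≤ 1 and p_a ≠ p_b. If ‖μ_a − μ_b‖ ≤ ε (ε-approximate parity) and ‖δ_y‖ ≤ ρ for each y ∈ {0,1} (ρ-approximate class-conditional separation), then for both g ∈ {a,b}: ‖μ_{1,g} − μ_{0,g}‖ ≤ (ε + ρ) / |p_a − p_b|. -/
theorem fair_aux {H : Type*} [NormedAddCommGroup H] [InnerProductSpace ℝ H]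
    (v x d1 d0 : H) (c p ε ρ : ℝ) (hc : c ≠ 0) (hp : 0 ≤ p ∧ p ≤ 1)
    (hx : ‖x‖ ≤ ε) (h1 : ‖d1‖ ≤ ρ) (h0 : ‖d0‖ ≤ ρ)
    (h : c • v = x - (p • d1 + (1 - p) • d0)) : ‖v‖ ≤ (ε + ρ) / |c| := by
  rw [le_div_iff₀ (abs_pos.mpr hc)]
  have e : ‖v‖ * |c| = ‖x - (p • d1 + (1 - p) • d0)‖ := by
    rw [← h, norm_smul, Real.norm_eq_abs, mul_comm]
  have a1 := norm_sub_le x (p • d1 + (1 - p) • d0)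
  have a2 := norm_add_le (p • d1) ((1 - p) • d0)
  rw [norm_smul, norm_smul, Real.norm_of_nonneg hp.1,
    Real.norm_of_nonneg (sub_nonneg.mpr hp.2)] at a2
  have a3 := mul_le_mul_of_nonneg_left h1 hp.1
  have a4 := mul_le_mul_of_nonneg_left h0 (sub_nonneg.mpr hp.2)
  rw [e]
  linarith

/-- **Approximate fair feature learning.** With group embeddings
`μ_g = p_g • μ_{1,g} + (1 - p_g) • μ_{0,g}` and class-conditional group differences
`δ_y = μ_{y,a} - μ_{y,b}`, if parity holds up to `ε` and class-conditional separation
up to `ρ`, and the base rates differ, then the within-group class-conditional signal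
is bounded by `(ε + ρ)/|p_a - p_b|` in each group. -/
theorem approx_fair_feature_learning {H : Type*} [NormedAddCommGroup H]
    [InnerProductSpace ℝ H]
    (μ1a μ0a μ1b μ0b : H) (pa pb : ℝ)
    (hpa : 0 ≤ pa ∧ pa ≤ 1) (hpb : 0 ≤ pb ∧ pb ≤ 1) (hbase : pa ≠ pb)
    (ε ρ : ℝ) (hε : 0 ≤ ε) (hρ : 0 ≤ ρ)
    (hparity : ‖(pa • μ1a + (1 - pa) • μ0a) - (pb • μ1b + (1 - pb) • μ0b)‖ ≤ ε)
    (hsep1 : ‖μ1a - μ1b‖ ≤ ρ) (hsep0 : ‖μ0a - μ0b‖ ≤ ρ) :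
    ‖μ1a - μ0a‖ ≤ (ε + ρ) / |pa - pb| ∧
    ‖μ1b - μ0b‖ ≤ (ε + ρ) / |pa - pb| := by
  have hc : pa - pb ≠ 0 := sub_ne_zero.mpr hbase
  constructor
  · exact fair_aux _ _ _ _ _ pb ε ρ hc hpb hparity hsep1 hsep0 (by module)
  · exact fair_aux _ _ _ _ _ pa ε ρ hc hpa hparity hsep1 hsep0 (by module)
end

section
/- (Pokémon–KMR bridge, tail bound.) Let H be a real Hilbert space and φ : Ω → H a measurable map that is Bochner integrable on each of the four events {Y = y} ∩ {G = g} (all of positive measure). Let w ∈ H with ‖w‖ ≤ W, and set S(ω) := ⟨w, φ(ω)⟩; assume 0 ≤ S ≤ 1 almost surely and E[S | {G = g}] = p_g for both g (group-conditional unbiasedness). Define δ_y := E[φ | {Y = y} ∩ {G = a}] − E[φ | {Y = y} ∩ {G = b}] (Bochner conditional means) and ρ := max over g ∈ {a,b} of (p_{ḡ}·‖δ_1‖ + (1 − p_{ḡ})·‖δ_0‖), where ḡ is the group opposite to g. If p_a ≠ p_b, then for every t with 0 < t ≤ 1: μ{ω : |S(ω) − Y(ω)| > t} ≤ W · ρ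 / (|p_a − p_b| · t). -/
open MeasureTheory
open scoped RealInnerProductSpace

/-- Conditional (Bochner) mean of a vector-valued `f` given the event `A`. -/
noncomputable def condMeanVec {Ω H : Type*} [MeasurableSpace Ω] [NormedAddCommGroup H]
    [NormedSpace ℝ H] (μ : Measure Ω) (A : Set Ω) (f : Ω → H) : H :=
  (μ A).toReal⁻¹ • ∫ ω in A, f ω ∂μ

/-- **Pokémon–KMR bridge, tail bound.** For a score `S = ⟪w, φ⟫` that is
group-conditionally unbiased, the distance of `S` from `Y` has tails controlled by
the class-conditional group differences `δ_y` of the feature map `φ`, rescaled by the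
base-rate gap. -/
theorem pokemon_kmr_bridge {Ω : Type*} [MeasurableSpace Ω] (μ : Measure Ω)
    [IsProbabilityMeasure μ]
    (Y : Ω → ℝ) (hYmeas : Measurable Y) (hY01 : ∀ ω, Y ω = 0 ∨ Y ω = 1)
    (G : Ω → Bool) (hGmeas : Measurable G)
    (hGa : 0 < μ {ω | G ω = true}) (hGb : 0 < μ {ω | G ω = false})
    (p : Bool → ℝ) (hp : ∀ g, p g = condExpEvent μ {ω | G ω = g} Y)
    (hp01 : ∀ g, 0 < p g ∧ p g < 1)
    {H : Type*} [NormedAddCommGroup H] [InnerProductSpace ℝ H] [CompleteSpace H]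
    (φ : Ω → H) (hφmeas : StronglyMeasurable φ)
    (hpos : ∀ y : ℝ, y = 0 ∨ y = 1 → ∀ g : Bool, 0 < μ ({ω | Y ω = y} ∩ {ω | G ω = g}))
    (hφint : ∀ y : ℝ, y = 0 ∨ y = 1 → ∀ g : Bool,
      IntegrableOn φ ({ω | Y ω = y} ∩ {ω | G ω = g}) μ)
    (W : ℝ) (hW : 0 ≤ W) (w : H) (hw : ‖w‖ ≤ W)
    (S : Ω → ℝ) (hS : ∀ ω, S ω = ⟪w, φ ω⟫)
    (hS01 : ∀ᵐ ω ∂μ, 0 ≤ S ω ∧ S ω ≤ 1)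
    (hunbiased : ∀ g, condExpEvent μ {ω | G ω = g} S = p g)
    (δ : ℝ → H)
    (hδ : ∀ y : ℝ, δ y = condMeanVec μ ({ω | Y ω = y} ∩ {ω | G ω = true}) φ
      - condMeanVec μ ({ω | Y ω = y} ∩ {ω | G ω = false}) φ)
    (ρ : ℝ)
    (hρ : ρ = max (p false * ‖δ 1‖ + (1 - p false) * ‖δ 0‖)
                  (p true * ‖δ 1‖ + (1 - p true) * ‖δ 0‖))
    (hbase : p true ≠ p false) :
    ∀ t : ℝ, 0 < t → t ≤ 1 →
      (μ {ω | t < |S ω - Y ω|}).toReal ≤ W * ρ / (|p true - p false| * t) := by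
  have hYs : ∀ y : ℝ, MeasurableSet {ω | Y ω = y} := fun y => hYmeas (measurableSet_singleton y)
  have hGs : ∀ g : Bool, MeasurableSet {ω | G ω = g} := fun g => hGmeas (measurableSet_singleton g)
  have hA : ∀ (y : ℝ) (g : Bool), MeasurableSet ({ω | Y ω = y} ∩ {ω | G ω = g}) :=
    fun y g => (hYs y).inter (hGs g)
  have hSm : AEStronglyMeasurable S μ := by
    have : S = fun ω => ⟪w, φ ω⟫ := funext hS
    rw [this]
    exact (stronglyMeasurable_const.inner hφmeas).aestronglyMeasurable
  have hSi : Integrable S μ := by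
    refine Integrable.of_bound hSm 1 ?_
    filter_upwards [hS01] with ω h
    rw [Real.norm_eq_abs, abs_of_nonneg h.1]; exact h.2
  have hYi : Integrable Y μ := by
    refine Integrable.of_bound hYmeas.aestronglyMeasurable 1 ?_
    filter_upwards with ω
    rcases hY01 ω with h | h <;> simp [h]
  have hDi : Integrable (fun ω => |S ω - Y ω|) μ := (hSi.sub hYi).abs
  have split : ∀ (f : Ω → ℝ), Integrable f μ → ∀ g : Bool, ∫ ω in {ω | G ω = g}, f ω ∂μ =
      (∫ ω in {ω | Y ω = 1} ∩ {ω | G ω = g}, f ω ∂μ)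
      + ∫ ω in {ω | Y ω = 0} ∩ {ω | G ω = g}, f ω ∂μ := by
    intro f hf g
    rw [← setIntegral_union _ (hA 0 g) hf.integrableOn hf.integrableOn]
    · congr 2
      ext ω
      rcases hY01 ω with h | h <;> simp [h]
    · rw [Set.disjoint_left]
      rintro ω ⟨h1, _⟩ ⟨h2, _⟩
      simp only [Set.mem_setOf_eq] at h1 h2
      rw [h1] at h2; norm_num at h2
  let M : ℝ → Bool → ℝ := fun y g => (μ ({ω | Y ω = y} ∩ {ω | G ω = g})).toReal
  let N : Bool → ℝ := fun g => (μ {ω | G ω = g}).toReal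
  let I : ℝ → Bool → ℝ := fun y g => ∫ ω in {ω | Y ω = y} ∩ {ω | G ω = g}, S ω ∂μ
  have hMpos : ∀ y : ℝ, y = 0 ∨ y = 1 → ∀ g, 0 < M y g := fun y hy g =>
    ENNReal.toReal_pos (hpos y hy g).ne' (measure_ne_top _ _)
  have hNpos : ∀ g, 0 < N g := by
    intro g
    refine ENNReal.toReal_pos ?_ (measure_ne_top _ _)
    cases g
    · exact hGb.ne'
    · exact hGa.ne'
  have hconst : ∀ (y : ℝ) (g : Bool) (c : ℝ),
      ∫ ω in {ω | Y ω = y} ∩ {ω | G ω = g}, c ∂μ = M y g * c := by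
    intro y g c
    simp [M, Measure.real]
  have hN : ∀ g, N g = M 1 g + M 0 g := by
    intro g
    have := split (fun _ => 1) (integrable_const _) g
    rw [hconst, hconst] at this
    simpa [N, Measure.real] using this
  have hYint : ∀ g, ∫ ω in {ω | G ω = g}, Y ω ∂μ = M 1 g := by
    intro g
    rw [split Y hYi g, setIntegral_congr_fun (g := fun _ => (1:ℝ)) (hA 1 g) (fun ω h => h.1),
      setIntegral_congr_fun (g := fun _ => (0:ℝ)) (hA 0 g) (fun ω h => h.1), hconst, hconst]
    ring
  have hpN : ∀ g, M 1 g = p g * N g := by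
    intro g
    have h := hp g
    rw [condExpEvent, hYint] at h
    have := (hNpos g).ne'
    rw [h]
    change _ = (N g)⁻¹ * _ * _
    field_simp
  have hIN : ∀ g, I 1 g + I 0 g = p g * N g := by
    intro g
    have h := hunbiased g
    rw [condExpEvent, split S hSi g] at h
    have := (hNpos g).ne'
    rw [← h]
    change _ = (N g)⁻¹ * (I 1 g + I 0 g) * _
    field_simp
  have hI0 : ∀ g, 0 ≤ I 0 g := by
    intro g
    refine integral_nonneg_of_ae (ae_restrict_of_ae ?_)
    filter_upwards [hS01] with ω h using h.1
  have hI1 : ∀ g, I 1 g ≤ M 1 g := by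
    intro g
    rw [← mul_one (M 1 g), ← hconst]
    refine integral_mono_ae hSi.integrableOn (integrable_const _) (ae_restrict_of_ae ?_)
    filter_upwards [hS01] with ω h using h.2
  have hE : ∀ g, ∫ ω in {ω | G ω = g}, |S ω - Y ω| ∂μ = (M 1 g - I 1 g) + I 0 g := by
    intro g
    rw [split _ hDi g]
    congr 1
    · have h1 : ∫ ω in {ω | Y ω = 1} ∩ {ω | G ω = g}, |S ω - Y ω| ∂μ
          = ∫ ω in {ω | Y ω = 1} ∩ {ω | G ω = g}, (1 - S ω) ∂μ := by
        refine setIntegral_congr_ae (hA 1 g) ?_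
        filter_upwards [hS01] with ω h hω
        have : Y ω = 1 := hω.1
        rw [this, abs_of_nonpos (by linarith [h.2])]; ring
      rw [h1, integral_sub (integrable_const _) hSi.integrableOn, hconst, mul_one]
    · refine setIntegral_congr_ae (hA 0 g) ?_
      filter_upwards [hS01] with ω h hω
      have : Y ω = 0 := hω.1
      rw [this, sub_zero, abs_of_nonneg h.1]
  have hmean : ∀ y : ℝ, y = 0 ∨ y = 1 → ∀ g,
      ⟪w, condMeanVec μ ({ω | Y ω = y} ∩ {ω | G ω = g}) φ⟫ = (M y g)⁻¹ * I y g := by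
    intro y hy g
    rw [condMeanVec, inner_smul_right, ← integral_inner (hφint y hy g)]
    simp only [I, hS, M]
  have hd : ∀ y : ℝ, y = 0 ∨ y = 1 →
      |(M y true)⁻¹ * I y true - (M y false)⁻¹ * I y false| ≤ W * ‖δ y‖ := by
    intro y hy
    rw [← hmean y hy, ← hmean y hy, ← inner_sub_right, ← hδ]
    exact (abs_real_inner_le_norm _ _).trans (by gcongr)
  have hM0 : ∀ g, M 0 g = (1 - p g) * N g := fun g => by linarith [hN g, hpN g]
  -- conditional means
  obtain ⟨m, hm⟩ : ∃ m : ℝ → Bool → ℝ, ∀ y g, m y g = (M y g)⁻¹ * I y g := ⟨_, fun _ _ => rfl⟩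
  have hmI : ∀ y : ℝ, y = 0 ∨ y = 1 → ∀ g, I y g = M y g * m y g := by
    intro y hy g
    have := (hMpos y hy g).ne'
    rw [hm]; field_simp
  have hbal : ∀ g, p g * m 1 g + (1 - p g) * m 0 g = p g := by
    intro g
    have h := hIN g
    rw [hmI 1 (Or.inr rfl), hmI 0 (Or.inl rfl), hpN, hM0] at h
    apply mul_right_cancel₀ (hNpos g).ne'
    linarith
  have hm0 : ∀ g, 0 ≤ m 0 g := fun g => by
    rw [hm]; exact mul_nonneg (inv_nonneg.2 (hMpos 0 (Or.inl rfl) g).le) (hI0 g)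
  have hm1 : ∀ g, m 1 g ≤ 1 := fun g => by
    rw [hm, inv_mul_le_iff₀ (hMpos 1 (Or.inr rfl) g), mul_one]; exact hI1 g
  have hd1 := hd 1 (Or.inr rfl)
  have hd0 := hd 0 (Or.inl rfl)
  rw [← hm, ← hm] at hd1 hd0
  have comb : ∀ q : ℝ, 0 < q → q < 1 →
      |q * (m 1 true - m 1 false) + (1 - q) * (m 0 true - m 0 false)|
        ≤ W * (q * ‖δ 1‖ + (1 - q) * ‖δ 0‖) := by
    intro q h0 h1
    refine (abs_add_le _ _).trans ?_
    rw [abs_mul, abs_mul, abs_of_pos h0, abs_of_pos (by linarith : 0 < 1 - q)]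
    have e1 := mul_le_mul_of_nonneg_left hd1 h0.le
    have e0 := mul_le_mul_of_nonneg_left hd0 (by linarith : 0 ≤ 1 - q)
    linarith
  have hD : 0 < |p true - p false| := abs_pos.2 (sub_ne_zero.2 hbase)
  have key : ∀ g, |p true - p false| * ((1 - m 1 g) + m 0 g) ≤ W * ρ := by
    intro g
    have hnn : 0 ≤ (1 - m 1 g) + m 0 g := by linarith [hm0 g, hm1 g]
    rw [← abs_of_nonneg hnn, ← abs_mul]
    cases g
    · have := comb (p true) (hp01 true).1 (hp01 true).2
      have e : p true * (m 1 true - m 1 false) + (1 - p true) * (m 0 true - m 0 false)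
          = (p true - p false) * ((1 - m 1 false) + m 0 false) := by
        linear_combination hbal true - hbal false
      rw [← e]
      refine this.trans (mul_le_mul_of_nonneg_left ?_ hW)
      rw [hρ]; exact le_max_right _ _
    · have := comb (p false) (hp01 false).1 (hp01 false).2
      have e : p false * (m 1 true - m 1 false) + (1 - p false) * (m 0 true - m 0 false)
          = (p true - p false) * ((1 - m 1 true) + m 0 true) := by
        linear_combination hbal true - hbal false
      rw [← e]
      refine this.trans (mul_le_mul_of_nonneg_left ?_ hW)
      rw [hρ]; exact le_max_left _ _
  have hEg : ∀ g, |p true - p false| * ∫ ω in {ω | G ω = g}, |S ω - Y ω| ∂μ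
      ≤ N g * (W * ρ) := by
    intro g
    rw [hE, hmI 1 (Or.inr rfl), hmI 0 (Or.inl rfl), hpN, hM0]
    have hp0 := (hp01 g).1
    have hp1 := (hp01 g).2
    have h1 : p g * (1 - m 1 g) + (1 - p g) * m 0 g ≤ (1 - m 1 g) + m 0 g := by
      nlinarith [hm0 g, hm1 g]
    calc _ = N g * (|p true - p false| * (p g * (1 - m 1 g) + (1 - p g) * m 0 g)) := by ring
      _ ≤ N g * (W * ρ) := by
        refine mul_le_mul_of_nonneg_left (le_trans ?_ (key g)) (hNpos g).le
        exact mul_le_mul_of_nonneg_left h1 hD.le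
  have hcompl : {ω | G ω = false} = {ω | G ω = true}ᶜ := by
    ext ω; simp
  have htot : ∫ ω, |S ω - Y ω| ∂μ = (∫ ω in {ω | G ω = true}, |S ω - Y ω| ∂μ)
      + ∫ ω in {ω | G ω = false}, |S ω - Y ω| ∂μ := by
    rw [hcompl, integral_add_compl (hGs true) hDi]
  have hNsum : N true + N false = 1 := by
    have := probReal_add_probReal_compl (μ := μ) (hGs true)
    rw [← hcompl] at this
    exact this
  have hfin : |p true - p false| * ∫ ω, |S ω - Y ω| ∂μ ≤ W * ρ := by
    rw [htot]
    have := hEg true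
    have := hEg false
    have e : W * ρ = N true * (W * ρ) + N false * (W * ρ) := by
      rw [← add_mul, hNsum, one_mul]
    linarith
  intro t ht _
  have mk := mul_meas_ge_le_integral_of_nonneg (μ := μ) (f := fun ω => |S ω - Y ω|)
    (Filter.Eventually.of_forall fun ω => abs_nonneg _) hDi t
  have hmono : (μ {ω | t < |S ω - Y ω|}).toReal ≤ μ.real {ω | t ≤ |S ω - Y ω|} :=
    measureReal_mono (fun ω (h : t < _) => h.le)
  rw [le_div_iff₀ (by positivity)]
  calc _ ≤ μ.real {ω | t ≤ |S ω - Y ω|} * (|p true - p false| * t) := by gcongr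
    _ = |p true - p false| * (t * μ.real {ω | t ≤ |S ω - Y ω|}) := by ring
    _ ≤ |p true - p false| * ∫ ω, |S ω - Y ω| ∂μ := by gcongr
    _ ≤ W * ρ := hfin
end
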